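/- In the RRM setting, suppose additionally that C_log is convex and closed under multiplication by positive scalars (αY ∈ C_log for all α > 0, Y ∈ C_log). Then the associated MARM ρ is positively homogeneous (ρ(αY) = α·ρ(Y) for all α > 0, Y ∈ C_log, extended-real arithmetic) if and only if the MARRM η satisfies η(X^α) = η(X)^α for all X ∈ C and all α > 0 (powers in [0,∞]). -/

import Mathlib

open MeasureTheory Filter Set ENNReal

/-- The set of strictly positive random variables (positive representatives of
elements of `L⁰₊₊`). -/
def L0pos (Ω : Type*) : Set (Ω → ℝ) := {X | ∀ ω, 0 < X ω}

/-- The multi-asset return risk measure (MARRM) associated with the security set `S`,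
the relative acceptance set `B` and the pricing map `π`:
`η(X) = inf {π(Z) : Z ∈ S, X/Z ∈ B}`, with `inf ∅ = ∞`. -/
noncomputable def marrm {Ω : Type*} (S B : Set (Ω → ℝ)) (π : (Ω → ℝ) → ℝ) (X : Ω → ℝ) : ℝ≥0∞ :=
  sInf ((fun Z => ENNReal.ofReal (π Z)) '' {Z | Z ∈ S ∧ (fun ω => X ω / Z ω) ∈ B})

/-- `L^∞₊₊`: strictly positive, (essentially) bounded random variables. -/
def LinftyPos {Ω : Type*} [MeasurableSpace Ω] (P : Measure Ω) : Set (Ω → ℝ) :=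
  {X | (∀ ω, 0 < X ω) ∧ ∃ c : ℝ, ∀ᵐ ω ∂P, X ω ≤ c}

/-- The image of a set of random variables under the pointwise logarithm,
e.g. `C_log = {log X : X ∈ C}`. -/
def logIm {Ω : Type*} (A : Set (Ω → ℝ)) : Set (Ω → ℝ) :=
  (fun X => fun ω => Real.log (X ω)) '' A

/-- The multi-asset risk measure (MARM) with security set `Slog`, acceptance set `Anu`
and pricing map `πlog`: `ρ(Y) = inf {πlog(L) : L ∈ Slog, Y - L ∈ Anu}`, with
values in `[-∞,∞]` and `inf ∅ = +∞`. -/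
noncomputable def marm {Ω : Type*} (Slog Anu : Set (Ω → ℝ)) (πlog : (Ω → ℝ) → ℝ)
    (Y : Ω → ℝ) : EReal :=
  sInf ((fun L => (πlog L : EReal)) '' {L | L ∈ Slog ∧ (fun ω => Y ω - L ω) ∈ Anu})

/-- The relative acceptance set `B_ρ̃ = {X ∈ K : ρ̃(X) ≤ 1}` induced by a
return risk measure `ρt` on `K`. -/
def rrmAccept {Ω : Type*} (K : Set (Ω → ℝ)) (ρt : (Ω → ℝ) → ℝ) : Set (Ω → ℝ) :=
  {X | X ∈ K ∧ ρt X ≤ 1}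

/-- The MARM associated with a return risk measurement regime `(B_ρ̃, S, π)` in the
RRM setting: security set `S_log`, acceptance set `A_ν = {Y ∈ K_log : ν(Y) ≤ 0}` with
`ν = log ∘ ρ̃ ∘ exp`, and pricing map `π_log = log ∘ π ∘ exp`. -/
noncomputable def marmOf {Ω : Type*} (S K : Set (Ω → ℝ)) (π ρt : (Ω → ℝ) → ℝ) :
    (Ω → ℝ) → EReal :=
  marm (logIm S) {L | L ∈ logIm K ∧ Real.log (ρt (fun ω => Real.exp (L ω))) ≤ 0}
    (fun L => Real.log (π (fun ω => Real.exp (L ω))))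

/-!
The extended logarithm is an order isomorphism from `[0, ∞]` onto `[-∞, ∞]`, so it commutes with
infima: `ρ (log X) = log (η X)` for every strictly positive `X`. As `log (X ^ a) = a * log X`, both
homogeneity properties assert `log (η (X ^ a)) = a * log (η X)`.
-/

section LogImage

variable {Ω : Type*}

lemma exp_log_of_mem_L0pos {X : Ω → ℝ} (hX : X ∈ L0pos Ω) :
    (fun ω => Real.exp (Real.log (X ω))) = X :=
  funext fun ω => Real.exp_log (hX ω)

lemma log_injOn_L0pos : InjOn (fun (X : Ω → ℝ) ω => Real.log (X ω)) (L0pos Ω) :=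
  fun _ hX _ hY h => funext fun ω => Real.log_injOn_pos (hX ω) (hY ω) (congrFun h ω)

lemma log_mem_logIm_iff {A : Set (Ω → ℝ)} {X : Ω → ℝ} (hA : A ⊆ L0pos Ω) (hX : X ∈ L0pos Ω) :
    (fun ω => Real.log (X ω)) ∈ logIm A ↔ X ∈ A :=
  log_injOn_L0pos.mem_image_iff hA hX

lemma log_sub_log_mem_logIm_iff {B : Set (Ω → ℝ)} {X Z : Ω → ℝ} (hB : B ⊆ L0pos Ω)
    (hX : X ∈ L0pos Ω) (hZ : Z ∈ L0pos Ω) :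
    (fun ω => Real.log (X ω) - Real.log (Z ω)) ∈ logIm B ↔ (fun ω => X ω / Z ω) ∈ B := by
  simp only [← Real.log_div (hX _).ne' (hZ _).ne']
  exact log_mem_logIm_iff hB fun ω => div_pos (hX ω) (hZ ω)

lemma setOf_mem_logIm_and_log_sub_mem_logIm {S B : Set (Ω → ℝ)} {X : Ω → ℝ} (hS : S ⊆ L0pos Ω)
    (hB : B ⊆ L0pos Ω) (hX : X ∈ L0pos Ω) :
    {L | L ∈ logIm S ∧ (fun ω => Real.log (X ω) - L ω) ∈ logIm B} =
      logIm {Z | Z ∈ S ∧ (fun ω => X ω / Z ω) ∈ B} := by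
  ext L
  constructor
  · rintro ⟨⟨Z, hZ, rfl⟩, hXZ⟩
    exact ⟨Z, ⟨hZ, (log_sub_log_mem_logIm_iff hB hX (hS hZ)).1 hXZ⟩, rfl⟩
  · rintro ⟨Z, ⟨hZ, hXZ⟩, rfl⟩
    exact ⟨⟨Z, hZ, rfl⟩, (log_sub_log_mem_logIm_iff hB hX (hS hZ)).2 hXZ⟩

end LogImage

section LogMarm

variable {Ω : Type*} {C S B K : Set (Ω → ℝ)} {π ρt : (Ω → ℝ) → ℝ}

/-- The MARM associated with an arbitrary return risk measurement regime `(B, S, π)`: security set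
`S_log`, acceptance set `B_log` and pricing map `log ∘ π ∘ exp`. The relative acceptance set `B`
need not come from a return risk measure. -/
noncomputable def logMarm (S B : Set (Ω → ℝ)) (π : (Ω → ℝ) → ℝ) : (Ω → ℝ) → EReal :=
  marm (logIm S) (logIm B) (fun L => Real.log (π (fun ω => Real.exp (L ω))))

lemma logIm_rrmAccept (hK : K ⊆ L0pos Ω) (hρ : ∀ X ∈ K, 0 < ρt X) :
    logIm (rrmAccept K ρt) =
      {L | L ∈ logIm K ∧ Real.log (ρt (fun ω => Real.exp (L ω))) ≤ 0} := by
  have log_risk_nonpos_iff : ∀ X ∈ K,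
      Real.log (ρt (fun ω => Real.exp (Real.log (X ω)))) ≤ 0 ↔ ρt X ≤ 1 := fun X hX => by
    rw [exp_log_of_mem_L0pos (hK hX), Real.log_nonpos_iff (hρ X hX).le]
  ext L
  constructor
  · rintro ⟨X, ⟨hX, hX_le⟩, rfl⟩
    exact ⟨⟨X, hX, rfl⟩, (log_risk_nonpos_iff X hX).2 hX_le⟩
  · rintro ⟨⟨X, hX, rfl⟩, hX_le⟩
    exact ⟨X, ⟨hX, (log_risk_nonpos_iff X hX).1 hX_le⟩, rfl⟩

lemma marmOf_eq_logMarm (hK : K ⊆ L0pos Ω) (hρ : ∀ X ∈ K, 0 < ρt X) :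
    marmOf S K π ρt = logMarm S (rrmAccept K ρt) π := by
  rw [marmOf, logMarm, logIm_rrmAccept hK hρ]

lemma logMarm_log (hS : S ⊆ L0pos Ω) (hB : B ⊆ L0pos Ω) (hπ : ∀ Z ∈ S, 0 < π Z) {X : Ω → ℝ}
    (hX : X ∈ L0pos Ω) :
    logMarm S B π (fun ω => Real.log (X ω)) = ENNReal.log (marrm S B π X) := by
  have log_price : ∀ Z ∈ S, (Real.log (π (fun ω => Real.exp (Real.log (Z ω)))) : EReal) =
      ENNReal.log (ENNReal.ofReal (π Z)) := fun Z hZ => by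
    rw [exp_log_of_mem_L0pos (hS hZ), ENNReal.log_ofReal_of_pos (hπ Z hZ)]
  rw [logMarm, marm, setOf_mem_logIm_and_log_sub_mem_logIm hS hB hX, logIm, image_image, marrm,
    ← ENNReal.logOrderIso_apply, OrderIso.map_sInf, ← sInf_image, image_image]
  exact congrArg sInf (image_congr fun Z hZ => log_price Z hZ.1)

lemma logMarm_mul_log_eq_iff (hS : S ⊆ L0pos Ω) (hB : B ⊆ L0pos Ω) (hπ : ∀ Z ∈ S, 0 < π Z)
    {X : Ω → ℝ} (hX : X ∈ L0pos Ω) (a : ℝ) :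
    logMarm S B π (fun ω => a * Real.log (X ω)) =
        (a : EReal) * logMarm S B π (fun ω => Real.log (X ω)) ↔
      marrm S B π (fun ω => X ω ^ a) = marrm S B π X ^ a := by
  simp only [← Real.log_rpow (hX _)]
  rw [logMarm_log hS hB hπ hX, logMarm_log hS hB hπ fun ω => Real.rpow_pos_of_pos (hX ω) a,
    ← ENNReal.log_rpow, ENNReal.log_injective.eq_iff]

theorem marm_posHom_iff_marrm_powerHom_general (hC : C ⊆ L0pos Ω) (hS : S ⊆ L0pos Ω)
    (hB : B ⊆ L0pos Ω) (hπ : ∀ Z ∈ S, 0 < π Z) :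
    (∀ a : ℝ, 0 < a → ∀ Y ∈ logIm C,
        logMarm S B π (fun ω => a * Y ω) = (a : EReal) * logMarm S B π Y)
      ↔ (∀ X ∈ C, ∀ a : ℝ, 0 < a →
        marrm S B π (fun ω => X ω ^ a) = marrm S B π X ^ a) := by
  constructor
  · intro hhom X hX a ha
    exact (logMarm_mul_log_eq_iff hS hB hπ (hC hX) a).1 (hhom a ha _ ⟨X, hX, rfl⟩)
  · rintro hpow a ha _ ⟨X, hX, rfl⟩
    exact (logMarm_mul_log_eq_iff hS hB hπ (hC hX) a).2 (hpow X hX a ha)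

end LogMarm

theorem marm_posHom_iff_marrm_powerHom {Ω : Type*} [MeasurableSpace Ω] (P : Measure Ω) [IsProbabilityMeasure P]
    (C S K : Set (Ω → ℝ)) (π ρt : (Ω → ℝ) → ℝ)
    (hCne : C.Nonempty) (hCpos : C ⊆ L0pos Ω)
    (hSne : S.Nonempty) (hSpos : S ⊆ L0pos Ω)
    (hπpos : ∀ Z ∈ S, 0 < π Z)
    (hKne : K.Nonempty) (hKpos : K ⊆ L0pos Ω)
    (hKcone : ∀ l : ℝ, 0 < l → ∀ X ∈ K, (fun ω => l * X ω) ∈ K)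
    (hKinf : LinftyPos P ⊆ K)
    (hcompat : ∀ X ∈ C, ∀ Z ∈ S, (fun ω => X ω / Z ω) ∈ K)
    (hCmul : ∀ X ∈ C, ∀ Y ∈ C, (fun ω => X ω * Y ω) ∈ C)
    (hCone : (fun _ => (1:ℝ)) ∈ C)
    (hCinv : ∀ X ∈ C, (fun ω => (X ω)⁻¹) ∈ C)
    (hρmono : ∀ X ∈ K, ∀ Y ∈ K, (∀ᵐ ω ∂P, X ω ≤ Y ω) → ρt X ≤ ρt Y)
    (hρhom : ∀ l : ℝ, 0 < l → ∀ X ∈ K, ρt (fun ω => l * X ω) = l * ρt X)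
    (hρpos : ∀ X ∈ K, 0 < ρt X)
    (hρone : ρt (fun _ => (1:ℝ)) = 1)
    (hClogconv : ∀ Y1 ∈ logIm C, ∀ Y2 ∈ logIm C, ∀ a ∈ Set.Ioo (0:ℝ) 1,
      (fun ω => a * Y1 ω + (1 - a) * Y2 ω) ∈ logIm C)
    (hClogcone : ∀ a : ℝ, 0 < a → ∀ Y ∈ logIm C, (fun ω => a * Y ω) ∈ logIm C) :
    (∀ a : ℝ, 0 < a → ∀ Y ∈ logIm C,
        marmOf S K π ρt (fun ω => a * Y ω) = (a : EReal) * marmOf S K π ρt Y)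
      ↔ (∀ X ∈ C, ∀ a : ℝ, 0 < a →
        marrm S (rrmAccept K ρt) π (fun ω => X ω ^ a)
          = marrm S (rrmAccept K ρt) π X ^ a) := by
  rw [marmOf_eq_logMarm hKpos hρpos]
  exact marm_posHom_iff_marrm_powerHom_general hCpos hSpos (fun _ hX => hKpos hX.1) hπpos
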